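/- Let M ∈ ℝ^{N×N} be the Laplacian of a nonnegative weighted directed graph. The algebraic multiplicity m of the zero eigenvalue of M equals the minimum number of directed trees in a directed spanning forest of the graph (i.e., the minimum number of vertex-disjoint directed trees which together contain all nodes), and all nonzero eigenvalues of M have positive real parts. -/

import Mathlib

open Matrix

/-!
Choose an inclusion-minimal set `R` of nodes from which every node can be reached. Both the
dimension of the kernel of the Laplacian `L` and the minimum number of trees in a spanning forest
equal `|R|`:

* The set of maximizers of a harmonic function (`L *ᵥ x = 0`) is closed under predecessors, so a
  harmonic function that vanishes on a reaching set is zero. The roots of a spanning forest form a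
  reaching set; hence `dim ker L` is at most the number of trees.
* By minimality of `R`, no node is an ancestor of two elements of `R`. Hence the ancestor sets of
  the elements of `R` are disjoint; each carries a left null vector of `L`, so `|R| ≤ dim ker L`.
* Sending each node to the first element of `R` that reaches it gives a forest with `|R|` trees.

The zero eigenvalue is semisimple: if `L *ᵥ (L *ᵥ x) = 0` and the maximum of `L *ᵥ x` were positive,
then `L *ᵥ x` would be positive on a set closed under predecessors, which fails at a point where `x`
is minimal on that set. Nonzero eigenvalues lie in Gershgorin discs with centre `L l l` and radius
`L l l`, which meet the closed left half-plane only in `0`.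
-/

open Relation (ReflTransGen)

section Digraph

variable {V ι : Type*} {E : V → V → Prop} {R S : Set V}

/-- A set of nodes from which every node can be reached along `E`, as from the roots of a spanning
forest. -/
def IsReachingSet (E : V → V → Prop) (R : Set V) : Prop :=
  ∀ v, ∃ r ∈ R, ReflTransGen E r v

/-- A set of nodes closed under predecessors with respect to `E`. The rows of the Laplacian indexed
by such a set vanish outside the set. -/
def IsPredClosed (E : V → V → Prop) (S : Set V) : Prop :=
  ∀ ⦃a b⦄, E a b → b ∈ S → a ∈ S

/-- The classes of `c` are the node sets of the trees of a directed spanning forest. A tree is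
encoded by its node set: a set of nodes is spanned by a directed tree if and only if one of its
nodes reaches all the others inside the set. -/
def IsSpanningForest (E : V → V → Prop) (c : V → ι) : Prop :=
  ∀ t, ∃ r, c r = t ∧ ∀ v, c v = t → ReflTransGen (fun a b ↦ c a = t ∧ c b = t ∧ E a b) r v

theorem IsPredClosed.mem_of_reflTransGen (hS : IsPredClosed E S) {a b : V}
    (hab : ReflTransGen E a b) (hb : b ∈ S) : a ∈ S := by
  induction hab using ReflTransGen.head_induction_on with
  | refl => exact hb
  | head hac _ hc => exact hS hac hc

theorem isPredClosed_setOf_reflTransGen (E : V → V → Prop) (r : V) :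
    IsPredClosed E {a | ReflTransGen E a r} :=
  fun _ _ hab hbr ↦ hbr.head hab

theorem exists_minimal_isReachingSet [Finite V] (E : V → V → Prop) :
    ∃ R, Minimal (IsReachingSet E) R :=
  exists_minimal_of_wellFoundedLT _ ⟨Set.univ, fun v ↦ ⟨v, Set.mem_univ v, .refl⟩⟩

theorem eq_of_reflTransGen_of_minimal_isReachingSet (hR : Minimal (IsReachingSet E) R) {r s : V}
    (hr : r ∈ R) (hs : s ∈ R) (hrs : ReflTransGen E r s) : r = s := by
  by_contra hne
  have hreach : IsReachingSet E (R \ {s}) := fun v ↦ by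
    obtain ⟨t, ht, htv⟩ := hR.prop v
    obtain rfl | hts := eq_or_ne t s
    · exact ⟨r, ⟨hr, hne⟩, hrs.trans htv⟩
    · exact ⟨t, ⟨ht, hts⟩, htv⟩
  exact (hR.le_of_le hreach Set.sdiff_subset hs).2 rfl

theorem eq_of_common_ancestor_of_minimal_isReachingSet (hR : Minimal (IsReachingSet E) R)
    {a r s : V} (hr : r ∈ R) (hs : s ∈ R) (har : ReflTransGen E a r) (has : ReflTransGen E a s) :
    r = s := by
  obtain ⟨t, ht, hta⟩ := hR.prop a
  have htr : t = r := eq_of_reflTransGen_of_minimal_isReachingSet hR ht hr (hta.trans har)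
  have hts : t = s := eq_of_reflTransGen_of_minimal_isReachingSet hR ht hs (hta.trans has)
  exact htr.symm.trans hts

theorem IsSpanningForest.exists_isReachingSet_range {c : V → ι} (hc : IsSpanningForest E c) :
    ∃ r : ι → V, IsReachingSet E (Set.range r) := by
  choose r _ hr using hc
  exact ⟨r, fun v ↦ ⟨r (c v), ⟨c v, rfl⟩,
    ReflTransGen.mono (fun _ _ h ↦ h.2.2) _ _ (hr (c v) v rfl)⟩⟩

-- If `t` is the first index whose root reaches `v`, then it is also the first one for every node on
-- a path from `r t` to `v`, so that this path stays inside the class of `t`.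
theorem exists_isSpanningForest_of_roots [LinearOrder ι] [WellFoundedLT ι] {r : ι → V}
    (hr : IsReachingSet E (Set.range r)) (hind : ∀ i j, ReflTransGen E (r i) (r j) → i = j) :
    ∃ c : V → ι, IsSpanningForest E c := by
  have hmin (v : V) : ∃ i, Minimal (fun i ↦ ReflTransGen E (r i) v) i := by
    obtain ⟨_, ⟨i, rfl⟩, hi⟩ := hr v
    exact exists_minimal_of_wellFoundedLT _ ⟨i, hi⟩
  choose c hc using hmin
  have hanti {u v : V} (huv : ReflTransGen E u v) : c v ≤ c u :=
    (le_total (c v) (c u)).elim id ((hc v).le_of_le ((hc u).prop.trans huv))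
  have hroot (t : ι) : c (r t) = t := hind _ _ (hc (r t)).prop
  have hpath (t : ι) (v : V) (htv : ReflTransGen E (r t) v) (hv : c v = t) :
      ReflTransGen (fun a b ↦ c a = t ∧ c b = t ∧ E a b) (r t) v := by
    induction htv with
    | refl => exact .refl
    | @tail a b hta hab ih =>
      have ha : c a = t := le_antisymm (hroot t ▸ hanti hta) (hv ▸ hanti (.single hab))
      exact (ih ha).tail ⟨ha, hv, hab⟩
  exact ⟨c, fun t ↦ ⟨r t, hroot t, fun v hv ↦ hpath t v (hv ▸ (hc v).prop) hv⟩⟩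

theorem exists_isSpanningForest_of_minimal_isReachingSet [Finite R]
    (hR : Minimal (IsReachingSet E) R) : ∃ c : V → Fin (Nat.card R), IsSpanningForest E c := by
  let e := (Finite.equivFin R).symm
  refine exists_isSpanningForest_of_roots (r := fun i ↦ (e i : V)) (fun v ↦ ?_) fun i j hij ↦ ?_
  · obtain ⟨s, hs, hsv⟩ := hR.prop v
    exact ⟨s, ⟨e.symm ⟨s, hs⟩, congrArg Subtype.val (e.apply_symm_apply ⟨s, hs⟩)⟩, hsv⟩
  · exact e.injective <| Subtype.ext <|
      eq_of_reflTransGen_of_minimal_isReachingSet hR (e i).2 (e j).2 hij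

end Digraph

section Kernel

variable {n ι K : Type*} [Field K]

theorem maxGenEigenspace_zero_eq_ker {R M : Type*} [CommRing R] [AddCommGroup M] [Module R M]
    {f : Module.End R M} (hf : ∀ x, f (f x) = 0 → f x = 0) :
    f.maxGenEigenspace 0 = LinearMap.ker f := by
  have hpow (k : ℕ) : ∀ x, (f ^ k) x = 0 → f x = 0 := by
    induction k with
    | zero => rintro x rfl; exact map_zero f
    | succ k ih => exact fun x hx ↦ hf x (ih (f x) (by rwa [pow_succ] at hx))
  ext x
  simp only [Module.End.mem_maxGenEigenspace, zero_smul, sub_zero, LinearMap.mem_ker]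
  exact ⟨fun ⟨k, hk⟩ ↦ hpow k x hk, fun hx ↦ ⟨1, by rwa [pow_one]⟩⟩

theorem rootMultiplicity_charpoly_zero_eq_finrank_ker [Fintype n] [DecidableEq n]
    {A : Matrix n n K} (hA : ∀ x, A *ᵥ (A *ᵥ x) = 0 → A *ᵥ x = 0) :
    A.charpoly.rootMultiplicity 0 = Module.finrank K (LinearMap.ker A.mulVecLin) := by
  rw [← charpoly_mulVecLin, ← LinearMap.finrank_maxGenEigenspace_eq,
    maxGenEigenspace_zero_eq_ker hA]

theorem linearIndependent_of_disjoint_support {y : ι → n → K} (hy : ∀ i, y i ≠ 0)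
    (hdisj : Pairwise fun i j ↦ Disjoint (y i).support (y j).support) :
    LinearIndependent K y := by
  choose p hp using fun i ↦ Function.ne_iff.1 (hy i)
  refine .of_pairwise_dual_eq_zero_one y (fun i ↦ (y i (p i))⁻¹ • LinearMap.proj (p i))
    (fun i j hij ↦ ?_) fun i ↦ inv_mul_cancel₀ (hp i)
  have hzero : y j (p i) = 0 :=
    Function.notMem_support.1 (Set.disjoint_left.1 (hdisj hij) (hp i))
  simp [hzero]

theorem finrank_ker_mulVecLin_transpose [Fintype n] (A : Matrix n n K) :
    Module.finrank K (LinearMap.ker Aᵀ.mulVecLin) =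
      Module.finrank K (LinearMap.ker A.mulVecLin) := by
  have hA := A.mulVecLin.finrank_range_add_finrank_ker
  have hAT := Aᵀ.mulVecLin.finrank_range_add_finrank_ker
  have hrank : Module.finrank K (LinearMap.range Aᵀ.mulVecLin) =
      Module.finrank K (LinearMap.range A.mulVecLin) := A.rank_transpose
  omega

theorem card_le_finrank_ker_of_disjoint_support [Fintype n] [Fintype ι] {A : Matrix n n K}
    {y : ι → n → K} (hy : ∀ i, y i ≠ 0)
    (hdisj : Pairwise fun i j ↦ Disjoint (y i).support (y j).support)
    (hyA : ∀ i, y i ᵥ* A = 0) :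
    Fintype.card ι ≤ Module.finrank K (LinearMap.ker A.mulVecLin) := by
  rw [← finrank_ker_mulVecLin_transpose]
  let z (i : ι) : LinearMap.ker Aᵀ.mulVecLin := ⟨y i, by simpa [mulVec_transpose] using hyA i⟩
  have hz : LinearIndependent K z :=
    .of_comp (Submodule.subtype _) (linearIndependent_of_disjoint_support hy hdisj)
  exact hz.fintype_card_le_finrank

theorem submatrix_mulVec_apply_of_block {R : Type*} [Semiring R] [Fintype n] {A : Matrix n n R}
    {S : Set n} [Fintype S] (hA : ∀ l ∈ S, ∀ k ∉ S, A l k = 0) (x : n → R) (l : S) :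
    (A.submatrix ((↑) : S → n) ((↑) : S → n) *ᵥ fun k ↦ x k) l = (A *ᵥ x) l :=
  Fintype.sum_of_injective _ Subtype.val_injective _ _
    (fun k hk ↦ mul_eq_zero_of_left (hA l l.2 k (by simpa using hk)) _) fun _ ↦ rfl

theorem extend_vecMul_eq_zero_of_block {R : Type*} [Semiring R] [Fintype n] {A : Matrix n n R}
    {S : Set n} [Fintype S] (hA : ∀ l ∈ S, ∀ k ∉ S, A l k = 0) {y : S → R}
    (hy : y ᵥ* A.submatrix ((↑) : S → n) ((↑) : S → n) = 0) :
    Function.extend ((↑) : S → n) y 0 ᵥ* A = 0 := by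
  ext k
  have hsum : (Function.extend ((↑) : S → n) y 0 ᵥ* A) k = ∑ l : S, y l * A l k := by
    refine (Fintype.sum_of_injective _ Subtype.val_injective _ _ (fun l hl ↦ ?_) fun l ↦ ?_).symm
    · exact mul_eq_zero_of_left (Function.extend_apply' y (0 : n → R) l hl) _
    · rw [Subtype.val_injective.extend_apply]
  rw [hsum]
  by_cases hk : k ∈ S
  · exact congrFun hy ⟨k, hk⟩
  · exact Finset.sum_eq_zero fun l _ ↦ mul_eq_zero_of_right _ (hA l l.2 k hk)

theorem exists_vecMul_eq_zero_of_block {R : Type*} [CommRing R] [IsDomain R] [Fintype n]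
    {A : Matrix n n R} {S : Set n} (hA : ∀ l ∈ S, ∀ k ∉ S, A l k = 0)
    {x : n → R} (hx : ∃ l ∈ S, x l ≠ 0) (hAx : ∀ l ∈ S, (A *ᵥ x) l = 0) :
    ∃ y, y ≠ 0 ∧ y.support ⊆ S ∧ y ᵥ* A = 0 := by
  classical
  have hdet : (A.submatrix ((↑) : S → n) ((↑) : S → n)).det = 0 := by
    obtain ⟨l, hl, hxl⟩ := hx
    refine exists_mulVec_eq_zero_iff.1
      ⟨fun k ↦ x k, Function.ne_iff.2 ⟨⟨l, hl⟩, hxl⟩, funext fun k ↦ ?_⟩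
    exact (submatrix_mulVec_apply_of_block hA x k).trans (hAx k k.2)
  obtain ⟨y, hy, hyA⟩ := exists_vecMul_eq_zero_iff.2 hdet
  refine ⟨Function.extend (↑) y 0, fun h ↦ hy ?_, fun k hk ↦ by_contra fun hkS ↦ hk ?_,
    extend_vecMul_eq_zero_of_block hA hyA⟩
  · exact funext fun s ↦ (Subtype.val_injective.extend_apply y 0 s).symm.trans (congrFun h s)
  · exact Function.extend_apply' y (0 : n → R) k fun ⟨s, hs⟩ ↦ hkS (hs ▸ s.2)

end Kernel

section Laplacian

variable {V α : Type*}

/-- The edge relation of the digraph with weights `w`, where `w b a` is the weight of the edge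
`a → b`; loops are ignored. -/
def IsEdge [Zero α] [LT α] (w : V → V → α) (a b : V) : Prop :=
  a ≠ b ∧ 0 < w b a

theorem weight_eq_zero_of_isPredClosed [Zero α] [PartialOrder α] {w : V → V → α}
    {S : Set V} (hw : ∀ l k, 0 ≤ w l k) (hS : IsPredClosed (IsEdge w) S) {l k : V} (hl : l ∈ S)
    (hk : k ∉ S) : w l k = 0 := by
  by_contra hne
  exact hk (hS ⟨fun h ↦ hk (h ▸ hl), (hw l k).lt_of_ne' hne⟩ hl)

/-- The Laplacian of the digraph with weights `w`; row `l` is formed from the edges into `l`. -/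
def laplacian [Fintype V] [DecidableEq V] [AddCommGroup α] (w : V → V → α) : Matrix V V α :=
  .of fun l k ↦ if l = k then ∑ j ∈ Finset.univ.erase l, w l j else -w l k

variable [Fintype V] [DecidableEq V]

theorem laplacian_apply_self [AddCommGroup α] (w : V → V → α) (l : V) :
    laplacian w l l = ∑ k ∈ Finset.univ.erase l, w l k :=
  if_pos rfl

theorem laplacian_apply_of_ne [AddCommGroup α] (w : V → V → α) {l k : V} (h : l ≠ k) :
    laplacian w l k = -w l k :=
  if_neg h

theorem eq_laplacian [AddCommGroup α] {w : V → V → α} {A : Matrix V V α}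
    (hdiag : ∀ l, A l l = ∑ k ∈ Finset.univ.erase l, w l k)
    (hoff : ∀ l k, l ≠ k → A l k = -w l k) : A = laplacian w := by
  ext l k
  obtain rfl | h := eq_or_ne l k
  · rw [hdiag, laplacian_apply_self]
  · rw [hoff l k h, laplacian_apply_of_ne w h]

theorem laplacian_mulVec_apply [Ring α] (w : V → V → α) (x : V → α) (l : V) :
    (laplacian w *ᵥ x) l = ∑ k, w l k * (x l - x k) := by
  rw [mulVec, dotProduct, ← Finset.add_sum_erase _ _ (Finset.mem_univ l), laplacian_apply_self,
    Finset.sum_mul, ← Finset.sum_add_distrib,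
    ← Finset.add_sum_erase _ (fun k ↦ w l k * (x l - x k)) (Finset.mem_univ l), sub_self, mul_zero,
    zero_add]
  refine Finset.sum_congr rfl fun k hk ↦ ?_
  rw [laplacian_apply_of_ne w (Finset.ne_of_mem_erase hk).symm, mul_sub, neg_mul, sub_eq_add_neg]

section MaximumPrinciple

variable [Ring α] [LinearOrder α] [IsStrictOrderedRing α] {w : V → V → α} {S : Set V} {x : V → α}

theorem exists_laplacian_mulVec_nonpos (hw : ∀ l k, 0 ≤ w l k)
    (hS : IsPredClosed (IsEdge w) S) (hne : S.Nonempty) (x : V → α) :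
    ∃ l ∈ S, (laplacian w *ᵥ x) l ≤ 0 := by
  obtain ⟨l, hl, hmin⟩ := Set.exists_min_image S x S.toFinite hne
  refine ⟨l, hl, ?_⟩
  rw [laplacian_mulVec_apply]
  refine Finset.sum_nonpos fun k _ ↦ ?_
  by_cases hk : k ∈ S
  · exact mul_nonpos_of_nonneg_of_nonpos (hw l k) (sub_nonpos.2 (hmin k hk))
  · rw [weight_eq_zero_of_isPredClosed hw hS hl hk, zero_mul]

theorem isPredClosed_maximizers (hw : ∀ l k, 0 ≤ w l k) (hx : laplacian w *ᵥ x = 0) :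
    IsPredClosed (IsEdge w) {u | ∀ v, x v ≤ x u} := by
  rintro a b ⟨-, hab⟩ hb
  have hterm : w b a * (x b - x a) = 0 := by
    have hsum : ∑ k, w b k * (x b - x k) = 0 := by
      rw [← laplacian_mulVec_apply, hx, Pi.zero_apply]
    have hnonneg : ∀ k ∈ Finset.univ, 0 ≤ w b k * (x b - x k) :=
      fun k _ ↦ mul_nonneg (hw b k) (sub_nonneg.2 (hb k))
    exact (Finset.sum_eq_zero_iff_of_nonneg hnonneg).1 hsum a (Finset.mem_univ a)
  have heq : x b = x a := sub_eq_zero.1 ((mul_eq_zero.1 hterm).resolve_left hab.ne')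
  exact fun v ↦ heq ▸ hb v

theorem laplacian_mulVec_nonpos_of_mulVec_mulVec (hw : ∀ l k, 0 ≤ w l k)
    (hx : laplacian w *ᵥ (laplacian w *ᵥ x) = 0) (v : V) : (laplacian w *ᵥ x) v ≤ 0 := by
  have : Nonempty V := ⟨v⟩
  obtain ⟨l, hl, hle⟩ := exists_laplacian_mulVec_nonpos hw (isPredClosed_maximizers hw hx)
    (Finite.exists_max _) x
  exact (hl v).trans hle

theorem laplacian_mulVec_eq_zero_of_mulVec_mulVec (hw : ∀ l k, 0 ≤ w l k)
    (hx : laplacian w *ᵥ (laplacian w *ᵥ x) = 0) : laplacian w *ᵥ x = 0 := by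
  ext v
  refine le_antisymm (laplacian_mulVec_nonpos_of_mulVec_mulVec hw hx v) ?_
  simpa [mulVec_neg] using
    laplacian_mulVec_nonpos_of_mulVec_mulVec hw (x := -x) (by simp [mulVec_neg, hx]) v

theorem nonpos_of_laplacian_mulVec_eq_zero (hw : ∀ l k, 0 ≤ w l k)
    (hS : IsReachingSet (IsEdge w) S) (hx : laplacian w *ᵥ x = 0)
    (hxS : ∀ r ∈ S, x r = 0) (v : V) : x v ≤ 0 := by
  have : Nonempty V := ⟨v⟩
  obtain ⟨u, hu⟩ := Finite.exists_max x
  obtain ⟨r, hr, hru⟩ := hS u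
  exact hxS r hr ▸ (isPredClosed_maximizers hw hx).mem_of_reflTransGen hru hu v

theorem eq_zero_of_laplacian_mulVec_eq_zero (hw : ∀ l k, 0 ≤ w l k)
    (hS : IsReachingSet (IsEdge w) S) (hx : laplacian w *ᵥ x = 0)
    (hxS : ∀ r ∈ S, x r = 0) : x = 0 := by
  ext v
  refine le_antisymm (nonpos_of_laplacian_mulVec_eq_zero hw hS hx hxS v) (neg_nonpos.1 ?_)
  exact nonpos_of_laplacian_mulVec_eq_zero hw hS (x := -x) (by rw [mulVec_neg, hx, neg_zero])
    (fun r hr ↦ by rw [Pi.neg_apply, hxS r hr, neg_zero]) v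

end MaximumPrinciple

section FinrankKernel

variable {ι K : Type*} [Field K] [LinearOrder K] [IsStrictOrderedRing K] {w : V → V → K}

theorem exists_vecMul_laplacian_eq_zero (hw : ∀ l k, 0 ≤ w l k) {S : Set V}
    (hS : IsPredClosed (IsEdge w) S) (hne : S.Nonempty) :
    ∃ y, y ≠ 0 ∧ y.support ⊆ S ∧ y ᵥ* laplacian w = 0 := by
  refine exists_vecMul_eq_zero_of_block (x := 1) (fun l hl k hk ↦ ?_) ?_ fun l _ ↦ ?_
  · rw [laplacian_apply_of_ne w (ne_of_mem_of_not_mem hl hk),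
      weight_eq_zero_of_isPredClosed hw hS hl hk, neg_zero]
  · exact hne.imp fun l hl ↦ ⟨hl, one_ne_zero⟩
  · simp [laplacian_mulVec_apply]

theorem card_le_finrank_ker_laplacian [Fintype ι] (hw : ∀ l k, 0 ≤ w l k) {S : ι → Set V}
    (hS : ∀ i, IsPredClosed (IsEdge w) (S i)) (hne : ∀ i, (S i).Nonempty)
    (hdisj : Pairwise fun i j ↦ Disjoint (S i) (S j)) :
    Fintype.card ι ≤ Module.finrank K (LinearMap.ker (laplacian w).mulVecLin) := by
  choose y hy hyS hyL using fun i ↦ exists_vecMul_laplacian_eq_zero hw (hS i) (hne i)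
  exact card_le_finrank_ker_of_disjoint_support hy
    (fun i j hij ↦ (hdisj hij).mono (hyS i) (hyS j)) hyL

theorem finrank_ker_laplacian_le_card [Fintype ι] (hw : ∀ l k, 0 ≤ w l k) {r : ι → V}
    (hr : IsReachingSet (IsEdge w) (Set.range r)) :
    Module.finrank K (LinearMap.ker (laplacian w).mulVecLin) ≤ Fintype.card ι := by
  let restrict : LinearMap.ker (laplacian w).mulVecLin →ₗ[K] ι → K :=
    LinearMap.funLeft K K r ∘ₗ Submodule.subtype _
  have hinj : Function.Injective restrict := by
    refine (injective_iff_map_eq_zero restrict).2 fun ⟨x, hx⟩ hxr ↦ Subtype.ext ?_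
    exact eq_zero_of_laplacian_mulVec_eq_zero hw hr hx
      (Set.forall_mem_range.2 fun i ↦ congrFun hxr i)
  simpa using LinearMap.finrank_le_finrank_of_injective hinj

theorem card_le_finrank_ker_laplacian_of_minimal (hw : ∀ l k, 0 ≤ w l k) {R : Set V}
    (hR : Minimal (IsReachingSet (IsEdge w)) R) :
    Nat.card R ≤ Module.finrank K (LinearMap.ker (laplacian w).mulVecLin) := by
  classical
  rw [Nat.card_eq_fintype_card]
  refine card_le_finrank_ker_laplacian hw
    (fun r : R ↦ isPredClosed_setOf_reflTransGen (IsEdge w) r) (fun r ↦ ⟨r, .refl⟩)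
    fun r s hrs ↦ Set.disjoint_left.2 fun a har has ↦ hrs (Subtype.ext ?_)
  exact eq_of_common_ancestor_of_minimal_isReachingSet hR r.2 s.2 har has

theorem isLeast_finrank_ker_laplacian (hw : ∀ l k, 0 ≤ w l k) :
    IsLeast {k | ∃ c : V → Fin k, IsSpanningForest (IsEdge w) c}
      (Module.finrank K (LinearMap.ker (laplacian w).mulVecLin)) := by
  have hle {k : ℕ} {c : V → Fin k} (hc : IsSpanningForest (IsEdge w) c) :
      Module.finrank K (LinearMap.ker (laplacian w).mulVecLin) ≤ k := by
    obtain ⟨r, hr⟩ := hc.exists_isReachingSet_range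
    simpa using finrank_ker_laplacian_le_card hw hr
  obtain ⟨R, hR⟩ := exists_minimal_isReachingSet (IsEdge w)
  obtain ⟨c, hc⟩ := exists_isSpanningForest_of_minimal_isReachingSet hR
  have hdim : Module.finrank K (LinearMap.ker (laplacian w).mulVecLin) = Nat.card R :=
    (hle hc).antisymm (card_le_finrank_ker_laplacian_of_minimal hw hR)
  exact ⟨hdim ▸ ⟨c, hc⟩, fun _ ⟨_, hc'⟩ ↦ hle hc'⟩

theorem isLeast_rootMultiplicity_charpoly_laplacian (hw : ∀ l k, 0 ≤ w l k) :
    IsLeast {k | ∃ c : V → Fin k, IsSpanningForest (IsEdge w) c}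
      ((laplacian w).charpoly.rootMultiplicity 0) := by
  rw [rootMultiplicity_charpoly_zero_eq_finrank_ker fun _ ↦
    laplacian_mulVec_eq_zero_of_mulVec_mulVec hw]
  exact isLeast_finrank_ker_laplacian hw

end FinrankKernel

theorem re_pos_of_norm_sub_le {a : ℝ} {μ : ℂ} (hμ : μ ≠ 0) (h : ‖μ - a‖ ≤ a) : 0 < μ.re := by
  have hsq : (μ.re - a) ^ 2 + μ.im ^ 2 ≤ a ^ 2 := by
    have hnormSq : Complex.normSq (μ - a) ≤ a ^ 2 :=
      Complex.normSq_eq_norm_sq (μ - a) ▸ pow_le_pow_left₀ (norm_nonneg _) h 2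
    simpa [Complex.normSq_apply, ← sq] using hnormSq
  have hpos : 0 < μ.re ^ 2 + μ.im ^ 2 := by
    simpa [Complex.normSq_apply, sq] using Complex.normSq_pos.2 hμ
  have ha : 0 ≤ a := (norm_nonneg _).trans h
  refine pos_of_mul_pos_right (a := a) ?_ ha
  linarith

theorem re_pos_of_mem_spectrum_laplacian {w : V → V → ℝ} (hw : ∀ l k, 0 ≤ w l k) {μ : ℂ}
    (hμ : μ ∈ spectrum ℂ ((laplacian w).map Complex.ofReal)) (hμ0 : μ ≠ 0) : 0 < μ.re := by
  rw [← spectrum_toLin', ← Module.End.hasEigenvalue_iff_mem_spectrum] at hμ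
  obtain ⟨l, hl⟩ := eigenvalue_mem_ball hμ
  have hradius : ∑ k ∈ Finset.univ.erase l, ‖(laplacian w).map Complex.ofReal l k‖ =
      laplacian w l l := by
    rw [laplacian_apply_self]
    refine Finset.sum_congr rfl fun k hk ↦ ?_
    rw [map_apply, laplacian_apply_of_ne w (Finset.ne_of_mem_erase hk).symm, Complex.norm_real,
      norm_neg, Real.norm_of_nonneg (hw l k)]
  rw [hradius, map_apply, mem_closedBall_iff_norm] at hl
  exact re_pos_of_norm_sub_le hμ0 hl

theorem stmt2_general (w : V → V → ℝ) (hw : ∀ l k, 0 ≤ w l k) :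
    IsLeast {k | ∃ c : V → Fin k, IsSpanningForest (IsEdge w) c}
      ((laplacian w).charpoly.rootMultiplicity 0) ∧
    ∀ μ ∈ spectrum ℂ ((laplacian w).map Complex.ofReal), μ ≠ 0 → 0 < μ.re :=
  ⟨isLeast_rootMultiplicity_charpoly_laplacian hw,
    fun _ hμ hμ0 ↦ re_pos_of_mem_spectrum_laplacian hw hμ hμ0⟩

end Laplacian

/-- For the Laplacian `M` of a nonnegative weighted digraph on `Nn` nodes
(edge `k → l` has weight `w l k`), the algebraic multiplicity of the zero eigenvalue
equals the minimum number `m` of directed trees in a directed spanning forest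
(vertex-disjoint directed rooted trees covering all nodes; a class of nodes `S` is
spanned by a directed tree of the graph iff some root in `S` reaches every node of `S`
via edges of the graph joining nodes of `S`), and all nonzero eigenvalues of `M` have
positive real parts. -/
theorem stmt2 (Nn : ℕ) (w : Fin Nn → Fin Nn → ℝ) (hw : ∀ l k, 0 ≤ w l k)
    (M : Matrix (Fin Nn) (Fin Nn) ℝ)
    (hMdiag : ∀ l, M l l = ∑ k ∈ Finset.univ.erase l, w l k)
    (hMoff : ∀ l k, l ≠ k → M l k = - w l k)
    (m : ℕ)
    (hm : IsLeast {m' : ℕ | ∃ c : Fin Nn → Fin m', ∀ t : Fin m',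
        ∃ r, c r = t ∧ ∀ v, c v = t →
          Relation.ReflTransGen (fun a b => c a = t ∧ c b = t ∧ a ≠ b ∧ 0 < w b a) r v} m) :
    M.charpoly.rootMultiplicity 0 = m ∧
    ∀ μ ∈ spectrum ℂ (M.map Complex.ofReal), μ ≠ 0 → 0 < μ.re := by
  obtain rfl := eq_laplacian hMdiag hMoff
  exact ⟨(stmt2_general w hw).1.unique hm, (stmt2_general w hw).2⟩
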